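/- (Lemma 5.4, properties of the optimal adaptive bandwidth.) Let 0 < β_i ≤ 2 for i = 1,…,d and L > 0. There exist constants c₁₃(β,L) > 0 and c₁₄(β,L) > 0 such that for every p ∈ 𝒫_d(β,L), every t ∈ ℝ^d and every n ≥ 2: (1) B_t(j̄) ≤ c₁₃(β,L) √( σ²_{t,trunc}(j̄) log n ), and (2) √( σ²_{t,trunc}(j̄) ) ≤ c₁₄(β,L) max{ (log n/n)^{β̄/(β̄+1)}, (p(t) log n/n)^{β̄/(2β̄+1)} }. -/

import Mathlib

open MeasureTheory Real
open scoped ENNReal BigOperators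

noncomputable section

/-- `Vec d` is `ℝ^d` (with the product structure, used for anisotropic statements). -/
abbrev Vec (d : ℕ) := Fin d → ℝ

/-- Samples of size `n` from `ℝ^d`. -/
abbrev Sample (d n : ℕ) := Fin n → Vec d

/-- The largest integer strictly smaller than `b` (for `b > 0`), i.e. `⌊b⌋` in the paper's
anisotropic Hölder class notation. -/
def hfl (b : ℝ) : ℕ := ⌈b⌉₊ - 1

/-- One-dimensional Taylor polynomial of `f` at `y'` of degree `l`, evaluated at `y`. -/
def taylorPoly (f : ℝ → ℝ) (l : ℕ) (y' y : ℝ) : ℝ :=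
  ∑ k ∈ Finset.range (l + 1), iteratedDeriv k f y' / (Nat.factorial k : ℝ) * (y - y') ^ k

/-- The slice of `f : ℝ^d → ℝ` along coordinate `i` through the point `x`. -/
def sliceFun {d : ℕ} (f : Vec d → ℝ) (i : Fin d) (x : Vec d) : ℝ → ℝ :=
  fun y => f (Function.update x i y)

/-- Anisotropic Hölder condition with exponents `β = (β_1, …, β_d)` and constant `L`:
in each coordinate `i`, the slices admit derivatives up to order `⌊β i⌋` (the largest
integer strictly less than `β i`) and the Taylor remainder of degree `⌊β i⌋` is bounded
by `L |y - y'| ^ (β i)`, uniformly in the remaining coordinates. For `β i ≤ 1` this is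
the usual coordinatewise Hölder condition. -/
def HolderAniso (d : ℕ) (β : Vec d) (L : ℝ) (f : Vec d → ℝ) : Prop :=
  ∀ i : Fin d,
    (∀ x : Vec d, ContDiff ℝ (hfl (β i)) (sliceFun f i x)) ∧
    ∀ (x : Vec d) (y y' : ℝ),
      |sliceFun f i x y - taylorPoly (sliceFun f i x) (hfl (β i)) y' y| ≤ L * |y - y'| ^ (β i)

/-- `p` is a probability density on `ℝ^d` (w.r.t. Lebesgue measure). -/
def IsProbDensity (d : ℕ) (p : Vec d → ℝ) : Prop :=
  Measurable p ∧ (∀ x, 0 ≤ p x) ∧ ∫ x, p x = 1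

/-- The class `𝒫_d(β, L)` of anisotropic Hölder-smooth probability densities. -/
def Pclass (d : ℕ) (β : Vec d) (L : ℝ) (p : Vec d → ℝ) : Prop :=
  IsProbDensity d p ∧ HolderAniso d β L p

/-- The unnormalized harmonic mean `β̄ = (∑ 1/β_i)⁻¹`. -/
def betaBar {d : ℕ} (β : Vec d) : ℝ := (∑ i, (β i)⁻¹)⁻¹

/-- `c₁(β, L) = sup { ‖p‖_∞ : p ∈ 𝒫_d(β, L) }`. -/
def c1const (d : ℕ) (β : Vec d) (L : ℝ) : ℝ :=
  sSup {c | ∃ p x, Pclass d β L p ∧ c = p x}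

/-- The measure on `ℝ^d` with Lebesgue density `p`. -/
def pdfMeasure (d : ℕ) (p : Vec d → ℝ) : Measure (Vec d) :=
  volume.withDensity fun x => ENNReal.ofReal (p x)

/-- The joint law `P^{⊗n}` of an i.i.d. sample of size `n` from the density `p`. -/
def jointMeasure (d n : ℕ) (p : Vec d → ℝ) : Measure (Sample d n) :=
  Measure.pi fun _ => pdfMeasure d p

/-- The `p`-dependent rate `ψ^n_{x,β} = min{ x, (x/n)^{β̄/(2β̄+1)} }` (with `bb = β̄`). -/
def psiRate (n : ℕ) (bb x : ℝ) : ℝ := min x ((x / n) ^ (bb / (2 * bb + 1)))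

end

noncomputable section

/-- `K` is a product kernel `K(x) = ∏ K_i(x_i)` whose factors are nonnegative, symmetric,
supported on `[-1,1]`, continuous on their support, integrate to one and are positive at `0`. -/
def IsProductKernel (d : ℕ) (K : Vec d → ℝ) : Prop :=
  ∃ Ki : Fin d → (ℝ → ℝ),
    (∀ x, K x = ∏ i, Ki i (x i)) ∧
    ∀ i : Fin d,
      (∀ y, 0 ≤ Ki i y) ∧ (∀ y, Ki i (-y) = Ki i y) ∧
      (∀ y, y ∉ Set.Icc (-1 : ℝ) 1 → Ki i y = 0) ∧
      ContinuousOn (Ki i) (Set.Icc (-1) 1) ∧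
      (∫ y, Ki i y = 1) ∧ 0 < Ki i 0

/-- The rescaled kernel `K_h(x) = (∏ h_i)⁻¹ K(x_1/h_1, …, x_d/h_d)`. -/
def scaledKernel (d : ℕ) (K : Vec d → ℝ) (h : Vec d) (x : Vec d) : ℝ :=
  (∏ i, h i)⁻¹ * K (fun i => x i / h i)

/-- The kernel density estimator `p̂_{n,h}(t) = n⁻¹ ∑_i K_h(t - X_i)`. -/
def kde (d n : ℕ) (K : Vec d → ℝ) (h : Vec d) (X : Sample d n) (t : Vec d) : ℝ :=
  (n : ℝ)⁻¹ * ∑ i, scaledKernel d K h (fun j => t j - X i j)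

/-- `‖K‖_sup`. -/
def KsupNorm (d : ℕ) (K : Vec d → ℝ) : ℝ := ⨆ x, |K x|

/-- `‖K‖₂² = ∫ K² dλ^d`. -/
def K2sq (d : ℕ) (K : Vec d → ℝ) : ℝ := ∫ x, (K x) ^ 2

/-- The exact variance proxy `σ_t²(h) = n⁻¹ ((K_h)² ∗ p)(t)`. -/
def sigmaSq (d n : ℕ) (K : Vec d → ℝ) (p : Vec d → ℝ) (h : Vec d) (t : Vec d) : ℝ :=
  (n : ℝ)⁻¹ * ∫ y, (scaledKernel d K h (fun i => t i - y i)) ^ 2 * p y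

/-- The truncation level `log²n / (n² ∏ h_i²)`. -/
def truncLevel (d n : ℕ) (h : Vec d) : ℝ :=
  (Real.log n) ^ 2 / ((n : ℝ) ^ 2 * (∏ i, h i) ^ 2)

/-- `σ²_{t,trunc}(h) = max{ log²n/(n² ∏ h_i²), σ_t²(h) }`. -/
def sigmaSqTrunc (d n : ℕ) (K : Vec d → ℝ) (p : Vec d → ℝ) (h : Vec d) (t : Vec d) : ℝ :=
  max (truncLevel d n h) (sigmaSq d n K p h t)

/-- The empirical variance `σ̃_t²(h) = (n² ∏ h_i²)⁻¹ ∑_i K²((t - X_i)/h)`. -/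
def sigmaTildeSq (d n : ℕ) (K : Vec d → ℝ) (h : Vec d) (X : Sample d n) (t : Vec d) : ℝ :=
  ((n : ℝ) ^ 2 * (∏ i, h i) ^ 2)⁻¹ * ∑ i, (K (fun j => (t j - X i j) / h j)) ^ 2

/-- `σ̃²_{t,trunc}(h) = max{ log²n/(n² ∏ h_i²), σ̃_t²(h) }`. -/
def sigmaTildeSqTrunc (d n : ℕ) (K : Vec d → ℝ) (h : Vec d) (X : Sample d n) (t : Vec d) : ℝ :=
  max (truncLevel d n h) (sigmaTildeSq d n K h X t)

/-- Membership of the multi-index `j` in the dyadic grid `𝒥`, i.e. `∑ j_i ≤ ⌊log₂(n/log²n)⌋`. -/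
def gridOK (d n : ℕ) (j : Fin d → ℕ) : Prop :=
  ((∑ i, j i : ℕ) : ℝ) ≤ Real.logb 2 ((n : ℝ) / (Real.log n) ^ 2)

/-- The bandwidth `(2^{-j_1}, …, 2^{-j_d})` associated with a multi-index `j`. -/
def bwOf (d : ℕ) (j : Fin d → ℕ) : Vec d := fun i => (2 : ℝ) ^ (-(j i : ℝ))

/-- The bias upper bound `B_t(h) = L ∑_i c_{9,i}(β) h_i^{β_i}`,
with `c_{9,i}(β) = ∫ |x_i|^{β_i} |K(x)| dλ^d(x)`. -/
def biasBound (d : ℕ) (K : Vec d → ℝ) (β : Vec d) (L : ℝ) (h : Vec d) : ℝ :=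
  L * ∑ i, (∫ x : Vec d, |x i| ^ (β i) * |K x|) * h i ^ (β i)

/-- The bias `b_t(h) = p(t) - (K_h ∗ p)(t)`. -/
def biasAt (d : ℕ) (K : Vec d → ℝ) (p : Vec d → ℝ) (h : Vec d) (t : Vec d) : ℝ :=
  p t - ∫ y, scaledKernel d K h (fun i => t i - y i) * p y

end

noncomputable section
/-- The constant `c₈(β,L) = min_i ( 2dL ∫ |x_i|^{β_i} K²(x) dλ^d(x) / ‖K‖₂² )^{-1/β_i}`. -/
def c8const (d : ℕ) (K : Vec d → ℝ) (β : Vec d) (L : ℝ) : ℝ :=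
  ⨅ i : Fin d,
    (2 * d * L * (∫ x : Vec d, |x i| ^ (β i) * (K x) ^ 2) / K2sq d K) ^ (-(β i)⁻¹)

/-- The reference (optimal adaptive) bandwidth `h̄` of (5.2), as a function of `p(t)`:
`h̄_i = c₈(β,L) max{ (log n/n)^{(β̄/(β̄+1))(1/β_i)}, (p(t) log n/n)^{(β̄/(2β̄+1))(1/β_i)} }`. -/
def hbar (d : ℕ) (K : Vec d → ℝ) (β : Vec d) (L : ℝ) (n : ℕ) (pt : ℝ) : Vec d :=
  fun i => c8const d K β L *
    max ((Real.log n / n) ^ ((betaBar β / (betaBar β + 1)) * (β i)⁻¹))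
        ((pt * Real.log n / n) ^ ((betaBar β / (2 * betaBar β + 1)) * (β i)⁻¹))

/-- The dyadic approximation `j̄_i = ⌊log₂(1/h̄_i)⌋ + 1` of the reference bandwidth. -/
def jbar (d : ℕ) (K : Vec d → ℝ) (β : Vec d) (L : ℝ) (n : ℕ) (pt : ℝ) : Fin d → ℤ :=
  fun i => ⌊Real.logb 2 (1 / hbar d K β L n pt i)⌋ + 1

/-- The bandwidth `(2^{-j_1}, …, 2^{-j_d})` associated with an integer multi-index. -/
def bwOfZ (d : ℕ) (j : Fin d → ℤ) : Vec d := fun i => (2 : ℝ) ^ (-(j i : ℝ))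
end

section KernelFacts

open Set

variable {d : ℕ} {K : Vec d → ℝ}

lemma IsProductKernel.measurable (hK : IsProductKernel d K) : Measurable K := by
  obtain ⟨Ki, hprod, hKi⟩ := hK
  have hm : ∀ i, Measurable (Ki i) := by
    intro i
    obtain ⟨-, -, hsupp, hcont, -, -⟩ := hKi i
    have heq : Ki i = (Icc (-1 : ℝ) 1).piecewise (Ki i) 0 := by
      funext y
      by_cases hy : y ∈ Icc (-1 : ℝ) 1
      · simp [hy]
      · rw [Set.piecewise_eq_of_notMem _ _ _ hy]
        exact hsupp y hy
    rw [heq]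
    exact hcont.measurable_piecewise continuousOn_const measurableSet_Icc
  rw [show K = fun x => ∏ i, Ki i (x i) from funext hprod]
  exact Finset.measurable_fun_prod _ fun i _ => (hm i).comp (measurable_pi_apply i)

lemma IsProductKernel.eq_zero_of_notMem (hK : IsProductKernel d K) {x : Vec d}
    (hx : x ∉ Icc (-1 : Vec d) 1) : K x = 0 := by
  obtain ⟨Ki, hprod, hKi⟩ := hK
  obtain ⟨i, hi⟩ : ∃ i, x i ∉ Icc (-1 : ℝ) 1 := by
    by_contra! h
    exact hx ⟨fun i => (h i).1, fun i => (h i).2⟩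
  rw [hprod]
  exact Finset.prod_eq_zero (Finset.mem_univ i) ((hKi i).2.2.1 _ hi)

lemma IsProductKernel.exists_bound (hK : IsProductKernel d K) : ∃ C, ∀ x, |K x| ≤ C := by
  obtain ⟨Ki, hprod, hKi⟩ := hK
  have hb : ∀ i, ∃ C, ∀ y, |Ki i y| ≤ C := by
    intro i
    obtain ⟨-, -, hsupp, hcont, -, -⟩ := hKi i
    obtain ⟨C, hC⟩ := isCompact_Icc.exists_bound_of_continuousOn hcont
    refine ⟨max C 0, fun y => ?_⟩
    by_cases hy : y ∈ Icc (-1 : ℝ) 1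
    · exact (hC y hy).trans (le_max_left _ _)
    · simp [hsupp y hy]
  choose C hC using hb
  refine ⟨∏ i, C i, fun x => ?_⟩
  rw [hprod, Finset.abs_prod]
  exact Finset.prod_le_prod (fun _ _ => abs_nonneg _) fun i _ => hC i _

/-- Reflection of the `i`-th coordinate. -/
def coordReflect (i : Fin d) (x : Vec d) : Vec d := fun j => if j = i then -x j else x j

lemma coordReflect_self (i : Fin d) (x : Vec d) : coordReflect i x i = -x i := by
  simp [coordReflect]

lemma coordReflect_of_ne {i j : Fin d} (h : j ≠ i) (x : Vec d) : coordReflect i x j = x j := by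
  simp [coordReflect, h]

lemma integral_comp_coordReflect (i : Fin d) (f : Vec d → ℝ) :
    ∫ x, f (coordReflect i x) = ∫ x, f x := by
  have hinv : Function.Involutive (coordReflect i) := by
    intro x
    funext j
    by_cases h : j = i <;> simp [coordReflect, h]
  have hmp : MeasurePreserving (coordReflect i) := by
    have := volume_preserving_pi (ι := Fin d) (α' := fun _ => ℝ) (β' := fun _ => ℝ)
      (f := fun j y => if j = i then -y else y) (fun j => by
        by_cases h : j = i
        · simpa [h] using Measure.measurePreserving_neg (volume : Measure ℝ)
        · simp only [h, if_false]
          exact MeasurePreserving.id volume)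
    exact this
  exact hmp.integral_comp (MeasurableEquiv.ofInvolutive _ hinv hmp.measurable).measurableEmbedding f

lemma IsProductKernel.comp_coordReflect (hK : IsProductKernel d K) (i : Fin d) (x : Vec d) :
    K (coordReflect i x) = K x := by
  obtain ⟨Ki, hprod, hKi⟩ := hK
  rw [hprod, hprod]
  refine Finset.prod_congr rfl fun j _ => ?_
  by_cases h : j = i
  · subst h
    rw [coordReflect_self, (hKi j).2.1]
  · rw [coordReflect_of_ne h]

lemma IsProductKernel.integrable_sq_mul (hK : IsProductKernel d K) {g : Vec d → ℝ}
    (hg : Measurable g) {C : ℝ} (hC : ∀ x ∈ Icc (-1 : Vec d) 1, |g x| ≤ C) :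
    Integrable fun x => K x ^ 2 * g x := by
  obtain ⟨B, hB⟩ := hK.exists_bound
  have hsupp : Function.support (fun x => K x ^ 2 * g x) ⊆ Icc (-1 : Vec d) 1 := by
    intro x hx
    by_contra h
    exact hx (by simp [hK.eq_zero_of_notMem h])
  rw [← integrableOn_iff_integrable_of_support_subset hsupp]
  refine Measure.integrableOn_of_bounded (M := B ^ 2 * C) isCompact_Icc.measure_lt_top.ne
    ((hK.measurable.pow_const 2).mul hg).aestronglyMeasurable ?_
  refine (ae_restrict_iff' measurableSet_Icc).2 (Filter.Eventually.of_forall fun x hx => ?_)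
  rw [Real.norm_eq_abs, abs_mul, abs_pow]
  exact mul_le_mul (pow_le_pow_left₀ (abs_nonneg _) (hB x) 2) (hC x hx) (abs_nonneg _)
    (sq_nonneg _)

lemma abs_rpow_le_one_of_mem_Icc {x : Vec d} (hx : x ∈ Icc (-1 : Vec d) 1) (i : Fin d) {b : ℝ}
    (hb : 0 ≤ b) : |x i| ^ b ≤ 1 :=
  Real.rpow_le_one (abs_nonneg _) (abs_le.2 ⟨hx.1 i, hx.2 i⟩) hb

lemma measurable_abs_rpow_coord (i : Fin d) (b : ℝ) :
    Measurable fun x : Vec d => |x i| ^ b := by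
  fun_prop

lemma IsProductKernel.integrable_abs_rpow_mul_sq (hK : IsProductKernel d K) (i : Fin d) {b : ℝ}
    (hb : 0 ≤ b) : Integrable fun x => |x i| ^ b * K x ^ 2 := by
  simp_rw [mul_comm (|_| ^ b)]
  refine hK.integrable_sq_mul (measurable_abs_rpow_coord i b) (C := 1) fun x hx => ?_
  rw [abs_of_nonneg (by positivity)]
  exact abs_rpow_le_one_of_mem_Icc hx i hb

lemma IsProductKernel.exists_open_pos (hK : IsProductKernel d K) :
    ∃ U : Set (Vec d), IsOpen U ∧ U.Nonempty ∧ ∀ x ∈ U, 0 < K x ∧ ∀ i, 0 < x i := by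
  obtain ⟨Ki, hprod, hKi⟩ := hK
  have hcont : ContinuousAt K 0 := by
    rw [show K = fun x => ∏ i, Ki i (x i) from funext hprod]
    refine tendsto_finsetProd _ fun i _ => ?_
    have h : ContinuousAt (Ki i) ((0 : Vec d) i) :=
      (hKi i).2.2.2.1.continuousAt (Icc_mem_nhds (by simp) (by simp))
    exact h.tendsto.comp (continuous_apply i).continuousAt
  have h0 : 0 < K 0 := by
    rw [hprod]
    exact Finset.prod_pos fun i _ => (hKi i).2.2.2.2.2
  obtain ⟨ε, hε, hball⟩ := Metric.eventually_nhds_iff_ball.1 (hcont.eventually (lt_mem_nhds h0))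
  refine ⟨Metric.ball 0 ε ∩ {x | ∀ i, 0 < x i}, Metric.isOpen_ball.inter ?_,
    ⟨fun _ => ε / 2, ?_, ?_⟩, fun x hx => ⟨hball x hx.1, hx.2⟩⟩
  · simp only [ofPred_forall]
    exact isOpen_iInter_of_finite fun i => isOpen_lt continuous_const (continuous_apply i)
  · rw [mem_ball_zero_iff, pi_norm_lt_iff hε]
    intro i
    rw [Real.norm_eq_abs, abs_of_pos (by positivity)]
    linarith
  · intro i
    show 0 < ε / 2
    positivity

lemma IsProductKernel.integral_abs_rpow_mul_sq_pos (hK : IsProductKernel d K) (i : Fin d) {b : ℝ}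
    (hb : 0 ≤ b) : 0 < ∫ x, |x i| ^ b * K x ^ 2 := by
  obtain ⟨U, hU, hne, hpos⟩ := hK.exists_open_pos
  rw [integral_pos_iff_support_of_nonneg (fun x => by positivity)
    (hK.integrable_abs_rpow_mul_sq i hb)]
  refine (hU.measure_pos volume hne).trans_le (measure_mono fun x hx => ?_)
  obtain ⟨h1, h2⟩ := hpos x hx
  have h3 : 0 < |x i| := abs_pos.2 (h2 i).ne'
  have : 0 < |x i| ^ b * K x ^ 2 := by positivity
  exact this.ne'

lemma IsProductKernel.integrable_sq (hK : IsProductKernel d K) : Integrable fun x => K x ^ 2 := by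
  simpa using hK.integrable_sq_mul (g := fun _ => 1) measurable_const (C := 1) (by simp)

lemma IsProductKernel.K2sq_pos (hK : IsProductKernel d K) : 0 < K2sq d K := by
  obtain ⟨U, hU, hne, hpos⟩ := hK.exists_open_pos
  rw [K2sq, integral_pos_iff_support_of_nonneg (fun x => by positivity) hK.integrable_sq]
  refine (hU.measure_pos volume hne).trans_le (measure_mono fun x hx => ?_)
  have h1 := (hpos x hx).1
  have : 0 < K x ^ 2 := by positivity
  exact this.ne'

end KernelFacts

section Scaling

variable {d : ℕ}

lemma integral_comp_mul_pi {h : Vec d} (hh : ∀ i, h i ≠ 0) (f : Vec d → ℝ) :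
    ∫ x, f x = |∏ i, h i| * ∫ x : Vec d, f fun i => h i * x i := by
  have hdet : (Matrix.diagonal h).det ≠ 0 := by
    rw [Matrix.det_diagonal]
    exact Finset.prod_ne_zero_iff.2 fun i _ => hh i
  have hmap : (Matrix.toLin' (Matrix.diagonal h) : Vec d → Vec d) = fun x i => h i * x i := by
    funext x i
    simp [Matrix.mulVec_diagonal]
  have hemb : MeasurableEmbedding fun (x : Vec d) i => h i * x i :=
    (MeasurableEquiv.piCongrRight fun i => MeasurableEquiv.mulLeft₀ (h i) (hh i)).measurableEmbedding
  have hvol := Real.smul_map_diagonal_volume_pi hdet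
  rw [hmap, Matrix.det_diagonal] at hvol
  conv_lhs => rw [← hvol]
  rw [integral_smul_measure, hemb.integral_map, ENNReal.toReal_ofReal (abs_nonneg _), smul_eq_mul]

lemma sigmaSq_eq {K p : Vec d → ℝ} {h : Vec d} (hh : ∀ i, 0 < h i) (n : ℕ) (t : Vec d) :
    sigmaSq d n K p h t =
      (n : ℝ)⁻¹ * (∏ i, h i)⁻¹ * ∫ x, K x ^ 2 * p fun i => t i - h i * x i := by
  have hP : 0 < ∏ i, h i := Finset.prod_pos fun i _ => hh i
  have h1 := integral_sub_left_eq_self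
    (fun y : Vec d => (scaledKernel d K h (fun i => t i - y i)) ^ 2 * p y) volume t
  rw [sigmaSq, ← h1, integral_comp_mul_pi (fun i => (hh i).ne'), abs_of_pos hP]
  have h2 : ∀ x : Vec d, scaledKernel d K h (fun i => t i - (t - fun i => h i * x i) i) ^ 2 *
      p (t - fun i => h i * x i) =
      ((∏ i, h i)⁻¹ ^ 2) * (K x ^ 2 * p fun i => t i - h i * x i) := by
    intro x
    have : (fun i => (t i - (t - fun i => h i * x i) i) / h i) = x := by
      funext i
      have := (hh i).ne'
      simp only [Pi.sub_apply, sub_sub_cancel]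
      field_simp
    rw [scaledKernel, this, mul_pow, mul_assoc]
    rfl
  simp_rw [h2]
  rw [integral_const_mul]
  field_simp

end Scaling

section Smoothing

open Set

variable {d : ℕ} {K p : Vec d → ℝ} {β t h : Vec d} {L : ℝ}

lemma HolderAniso.abs_second_difference_le (hp : HolderAniso d β L p) {i : Fin d}
    (hβ : 0 < β i ∧ β i ≤ 2) (x : Vec d) (y u : ℝ) :
    |sliceFun p i x (y - u) + sliceFun p i x (y + u) - 2 * sliceFun p i x y| ≤
      2 * (L * |u| ^ β i) := by
  obtain ⟨a, ha⟩ : ∃ a, ∀ z,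
      |sliceFun p i x z - (sliceFun p i x y + a * (z - y))| ≤ L * |z - y| ^ β i := by
    have hT := fun z => (hp i).2 x z y
    have hfl_le : hfl (β i) ≤ 1 := by
      have : ⌈β i⌉₊ ≤ 2 := Nat.ceil_le.2 (by exact_mod_cast hβ.2)
      unfold hfl
      omega
    interval_cases hfl (β i)
    · exact ⟨0, fun z => by simpa [taylorPoly] using hT z⟩
    · exact ⟨deriv (sliceFun p i x) y, fun z => by
        simpa [taylorPoly, Finset.sum_range_succ] using hT z⟩
  have h1 := ha (y - u)
  have h2 := ha (y + u)
  rw [sub_sub_cancel_left, abs_neg, abs_le] at h1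
  rw [add_sub_cancel_left, abs_le] at h2
  rw [abs_le]
  constructor <;> linarith [h1.1, h1.2, h2.1, h2.2]

/-- The point obtained from `t` by moving the coordinates in `S` by `-h_j x_j`. -/
def partialShift (t h : Vec d) (S : Finset (Fin d)) (x : Vec d) : Vec d :=
  fun j => t j - if j ∈ S then h j * x j else 0

lemma partialShift_empty (x : Vec d) : partialShift t h ∅ x = t := by
  funext j
  simp [partialShift]

lemma partialShift_univ (x : Vec d) :
    partialShift t h Finset.univ x = fun j => t j - h j * x j := by
  funext j
  simp [partialShift]

lemma measurable_partialShift (S : Finset (Fin d)) : Measurable (partialShift t h S) := by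
  refine measurable_pi_lambda _ fun j => ?_
  unfold partialShift
  by_cases hj : j ∈ S <;> simp only [hj, if_true, if_false] <;> fun_prop

lemma partialShift_insert {S : Finset (Fin d)} {i : Fin d} (x : Vec d) :
    partialShift t h (insert i S) x =
      Function.update (partialShift t h S x) i (t i - h i * x i) := by
  funext j
  by_cases hj : j = i
  · subst hj
    simp [partialShift]
  · simp [partialShift, hj]

lemma partialShift_insert_coordReflect {S : Finset (Fin d)} {i : Fin d} (x : Vec d) :
    partialShift t h (insert i S) (coordReflect i x) =
      Function.update (partialShift t h S x) i (t i + h i * x i) := by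
  funext j
  by_cases hj : j = i
  · subst hj
    simp [partialShift, coordReflect_self]
  · simp [partialShift, hj, coordReflect_of_ne hj]

lemma update_partialShift {S : Finset (Fin d)} {i : Fin d} (hi : i ∉ S) (x : Vec d) :
    Function.update (partialShift t h S x) i (t i) = partialShift t h S x := by
  rw [Function.update_eq_self_iff]
  simp [partialShift, hi]

lemma HolderAniso.abs_partialShift_second_difference_le (hp : HolderAniso d β L p) {i : Fin d}
    (hβ : 0 < β i ∧ β i ≤ 2) (hh : 0 ≤ h i) {S : Finset (Fin d)} (hi : i ∉ S) (x : Vec d) :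
    |p (partialShift t h (insert i S) x) + p (partialShift t h (insert i S) (coordReflect i x)) -
      2 * p (partialShift t h S x)| ≤ 2 * (L * h i ^ β i * |x i| ^ β i) := by
  have := hp.abs_second_difference_le hβ (partialShift t h S x) (t i) (h i * x i)
  rw [abs_mul, abs_of_nonneg hh, Real.mul_rpow hh (abs_nonneg _), ← mul_assoc L] at this
  rw [partialShift_insert, partialShift_insert_coordReflect]
  simpa only [sliceFun, update_partialShift hi] using this

lemma HolderAniso.exists_partialShift_bound (hp : HolderAniso d β L p) (hp0 : ∀ x, 0 ≤ p x)
    (hβ : ∀ i, 0 < β i ∧ β i ≤ 2) (hL : 0 ≤ L) (hh : ∀ i, 0 ≤ h i) (S : Finset (Fin d)) :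
    ∃ C, ∀ x ∈ Icc (-1 : Vec d) 1, |p (partialShift t h S x)| ≤ C := by
  induction S using Finset.induction_on with
  | empty => exact ⟨|p t|, fun x _ => by rw [partialShift_empty]⟩
  | insert i S hi ih =>
    obtain ⟨C, hC⟩ := ih
    refine ⟨2 * C + 2 * (L * h i ^ β i * 1), fun x hx => ?_⟩
    have h1 := (abs_le.1 (hp.abs_partialShift_second_difference_le (t := t) (hβ i) (hh i) hi x)).2
    have h2 := hp0 (partialShift t h (insert i S) (coordReflect i x))
    have h3 := (abs_le.1 (hC x hx)).2
    have h4 : L * h i ^ β i * |x i| ^ β i ≤ L * h i ^ β i * 1 :=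
      mul_le_mul_of_nonneg_left (abs_rpow_le_one_of_mem_Icc hx i (hβ i).1.le)
        (mul_nonneg hL (Real.rpow_nonneg (hh i) _))
    rw [abs_of_nonneg (hp0 _)]
    linarith

lemma Pclass.integrable_sq_mul_partialShift (hK : IsProductKernel d K) (hp : Pclass d β L p)
    (hβ : ∀ i, 0 < β i ∧ β i ≤ 2) (hL : 0 ≤ L) (hh : ∀ i, 0 ≤ h i) (S : Finset (Fin d)) :
    Integrable fun x => K x ^ 2 * p (partialShift t h S x) := by
  obtain ⟨C, hC⟩ := hp.2.exists_partialShift_bound (t := t) hp.1.2.1 hβ hL hh S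
  exact hK.integrable_sq_mul (hp.1.1.comp (measurable_partialShift S)) hC

/-- Smoothing with the squared kernel: symmetry of `K` cancels the first-order Taylor terms, one
coordinate at a time. -/
lemma Pclass.abs_integral_sq_mul_partialShift_sub_le (hK : IsProductKernel d K)
    (hp : Pclass d β L p) (hβ : ∀ i, 0 < β i ∧ β i ≤ 2) (hL : 0 ≤ L) (hh : ∀ i, 0 ≤ h i)
    (S : Finset (Fin d)) :
    |(∫ x, K x ^ 2 * p (partialShift t h S x)) - p t * K2sq d K| ≤
      ∑ i ∈ S, L * h i ^ β i * ∫ x, |x i| ^ β i * K x ^ 2 := by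
  induction S using Finset.induction_on with
  | empty =>
    simp only [partialShift_empty, Finset.sum_empty]
    rw [integral_mul_const, K2sq, mul_comm, sub_self, abs_zero]
  | insert i S hi ih =>
    rw [Finset.sum_insert hi]
    have hS := hp.integrable_sq_mul_partialShift (t := t) hK hβ hL hh S
    have hiS := hp.integrable_sq_mul_partialShift (t := t) hK hβ hL hh (insert i S)
    have hrefl : ∫ x, K x ^ 2 * p (partialShift t h (insert i S) (coordReflect i x)) =
        ∫ x, K x ^ 2 * p (partialShift t h (insert i S) x) := by
      rw [← integral_comp_coordReflect i fun x => K x ^ 2 * p (partialShift t h (insert i S) x)]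
      simp_rw [hK.comp_coordReflect]
    have hiS' : Integrable fun x =>
        K x ^ 2 * p (partialShift t h (insert i S) (coordReflect i x)) := by
      obtain ⟨C, hC⟩ := hp.2.exists_partialShift_bound (t := t) hp.1.2.1 hβ hL hh (insert i S)
      refine hK.integrable_sq_mul ((hp.1.1.comp (measurable_partialShift _)).comp ?_) (C := C) ?_
      · refine measurable_pi_lambda _ fun j => ?_
        unfold coordReflect
        split_ifs <;> fun_prop
      · refine fun x hx => hC _ ⟨fun j => ?_, fun j => ?_⟩ <;>
        · have h1 := hx.1 j
          have h2 := hx.2 j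
          simp only [Pi.neg_apply, Pi.one_apply, coordReflect] at h1 h2 ⊢
          split_ifs <;> linarith
    have hstep : |∫ x, K x ^ 2 * (p (partialShift t h (insert i S) x) +
        p (partialShift t h (insert i S) (coordReflect i x)) - 2 * p (partialShift t h S x))| ≤
        2 * (L * h i ^ β i * ∫ x, |x i| ^ β i * K x ^ 2) := by
      rw [← mul_assoc, ← integral_const_mul, ← Real.norm_eq_abs]
      refine norm_integral_le_of_norm_le
        ((hK.integrable_abs_rpow_mul_sq i (hβ i).1.le).const_mul _)
        (Filter.Eventually.of_forall fun x => ?_)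
      rw [Real.norm_eq_abs, abs_mul, abs_of_nonneg (sq_nonneg (K x))]
      refine (mul_le_mul_of_nonneg_left
        (hp.2.abs_partialShift_second_difference_le (hβ i) (hh i) hi x) (sq_nonneg _)).trans_eq ?_
      ring
    have hsplit : ∫ x, K x ^ 2 * (p (partialShift t h (insert i S) x) +
        p (partialShift t h (insert i S) (coordReflect i x)) - 2 * p (partialShift t h S x)) =
        2 * ((∫ x, K x ^ 2 * p (partialShift t h (insert i S) x)) -
          ∫ x, K x ^ 2 * p (partialShift t h S x)) := by
      simp_rw [mul_sub, mul_add, mul_left_comm _ (2 : ℝ)]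
      have hsub := integral_sub (hiS.add hiS') (hS.const_mul 2)
      simp only [Pi.add_apply] at hsub
      rw [hsub, integral_add hiS hiS', hrefl,
        integral_const_mul]
      ring
    rw [hsplit, abs_mul, abs_two] at hstep
    have htri := abs_sub_le (∫ x, K x ^ 2 * p (partialShift t h (insert i S) x))
      (∫ x, K x ^ 2 * p (partialShift t h S x)) (p t * K2sq d K)
    linarith

lemma Pclass.abs_integral_sq_mul_sub_le (hK : IsProductKernel d K)
    (hp : Pclass d β L p) (hβ : ∀ i, 0 < β i ∧ β i ≤ 2) (hL : 0 ≤ L) (hh : ∀ i, 0 ≤ h i) :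
    |(∫ x, K x ^ 2 * p fun i => t i - h i * x i) - p t * K2sq d K| ≤
      ∑ i, L * h i ^ β i * ∫ x, |x i| ^ β i * K x ^ 2 := by
  simpa only [partialShift_univ] using
    hp.abs_integral_sq_mul_partialShift_sub_le (t := t) hK hβ hL hh Finset.univ

end Smoothing

section Rates

lemma dyadic_bounds {x : ℝ} (hx : 0 < x) :
    x / 2 ≤ (2 : ℝ) ^ (-((⌊Real.logb 2 (1 / x)⌋ + 1 : ℤ) : ℝ)) ∧
      (2 : ℝ) ^ (-((⌊Real.logb 2 (1 / x)⌋ + 1 : ℤ) : ℝ)) ≤ x := by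
  have hlog : Real.logb 2 (1 / x) = -Real.logb 2 x := by rw [one_div, Real.logb_inv]
  have hpow : (2 : ℝ) ^ Real.logb 2 x = x := Real.rpow_logb two_pos (by norm_num) hx
  have h1 := Int.floor_le (Real.logb 2 (1 / x))
  have h2 := Int.lt_floor_add_one (Real.logb 2 (1 / x))
  push_cast
  constructor
  · have : x / 2 = (2 : ℝ) ^ (Real.logb 2 x - 1) := by
      rw [Real.rpow_sub two_pos, hpow, Real.rpow_one]
    rw [this]
    exact Real.rpow_le_rpow_of_exponent_le one_le_two (by linarith)
  · conv_rhs => rw [← hpow]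
    exact Real.rpow_le_rpow_of_exponent_le one_le_two (by linarith)

lemma max_rpow_mul {a b u v w : ℝ} (ha : 0 ≤ a) (hb : 0 ≤ b) (hw : 0 ≤ w) :
    max (a ^ (u * w)) (b ^ (v * w)) = max (a ^ u) (b ^ v) ^ w := by
  rw [Real.rpow_mul ha, Real.rpow_mul hb]
  have hu := Real.rpow_nonneg ha u
  have hv := Real.rpow_nonneg hb v
  rcases le_total (a ^ u) (b ^ v) with h | h
  · rw [max_eq_right h, max_eq_right (Real.rpow_le_rpow hu h hw)]
  · rw [max_eq_left h, max_eq_left (Real.rpow_le_rpow hv h hw)]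

variable {d : ℕ} {K : Vec d → ℝ} {β : Vec d} {L : ℝ}

lemma c8const_pos (hd : 1 ≤ d) (hK : IsProductKernel d K) (hβ : ∀ i, 0 < β i) (hL : 0 < L) :
    0 < c8const d K β L := by
  have : Nonempty (Fin d) := ⟨⟨0, hd⟩⟩
  obtain ⟨i, hi⟩ := exists_eq_ciInf_of_finite (f := fun i : Fin d =>
    (2 * d * L * (∫ x : Vec d, |x i| ^ (β i) * (K x) ^ 2) / K2sq d K) ^ (-(β i)⁻¹))
  rw [c8const, ← hi]
  have h1 := hK.integral_abs_rpow_mul_sq_pos i (hβ i).le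
  have h2 := hK.K2sq_pos
  have h3 : (0 : ℝ) < d := by exact_mod_cast hd
  positivity

lemma c8const_rpow_mul_le (hd : 1 ≤ d) (hK : IsProductKernel d K) (hβ : ∀ i, 0 < β i)
    (hL : 0 < L) (i : Fin d) :
    L * c8const d K β L ^ β i * (∫ x, |x i| ^ β i * K x ^ 2) ≤ K2sq d K / (2 * d) := by
  have h1 := hK.integral_abs_rpow_mul_sq_pos i (hβ i).le
  have h2 := hK.K2sq_pos
  have h3 : (0 : ℝ) < d := by exact_mod_cast hd
  have hle : c8const d K β L ≤
      (2 * d * L * (∫ x : Vec d, |x i| ^ (β i) * (K x) ^ 2) / K2sq d K) ^ (-(β i)⁻¹) :=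
    ciInf_le (Set.finite_range _).bddBelow i
  have hpow := Real.rpow_le_rpow (c8const_pos hd hK hβ hL).le hle (hβ i).le
  rw [← Real.rpow_mul (by positivity), neg_mul, inv_mul_cancel₀ (hβ i).ne', Real.rpow_neg_one]
    at hpow
  calc L * c8const d K β L ^ β i * (∫ x, |x i| ^ β i * K x ^ 2)
      ≤ L * (2 * d * L * (∫ x : Vec d, |x i| ^ (β i) * (K x) ^ 2) / K2sq d K)⁻¹ *
        (∫ x, |x i| ^ β i * K x ^ 2) := by gcongr
    _ = K2sq d K / (2 * d) := by field_simp

/-- The rate `M = max{δ^{β̄/(β̄+1)}, (qδ)^{β̄/(2β̄+1)}}` balances `δ ≤ M^{1+s}`, `qδ ≤ M^{2+s}`,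
where `s = 1/β̄`, with equality in at least one of the two. -/
lemma rate_balance {s δ q M : ℝ} (hs : 0 < s) (hδ : 0 < δ) (hq : 0 ≤ q)
    (hM : M = max (δ ^ (s⁻¹ / (s⁻¹ + 1))) ((q * δ) ^ (s⁻¹ / (2 * s⁻¹ + 1)))) :
    0 < M ∧ δ ≤ M * M ^ s ∧ q * δ ≤ M ^ 2 * M ^ s ∧
      (δ = M * M ^ s ∨ q * δ = M ^ 2 * M ^ s) := by
  have e1 : s⁻¹ / (s⁻¹ + 1) = (1 + s)⁻¹ := by field_simp
  have e2 : s⁻¹ / (2 * s⁻¹ + 1) = (2 + s)⁻¹ := by field_simp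
  rw [e1, e2] at hM
  have hqδ : 0 ≤ q * δ := by positivity
  have hMpos : 0 < M := hM ▸ lt_max_of_lt_left (Real.rpow_pos_of_pos hδ _)
  have p1 : M * M ^ s = M ^ (1 + s) := by rw [Real.rpow_add hMpos, Real.rpow_one]
  have p2 : M ^ 2 * M ^ s = M ^ (2 + s) := by
    rw [Real.rpow_add hMpos, Real.rpow_two]
  rw [p1, p2]
  refine ⟨hMpos, ?_, ?_, ?_⟩
  · rw [← Real.rpow_inv_le_iff_of_pos hδ.le hMpos.le (by linarith), hM]
    exact le_max_left _ _
  · rw [← Real.rpow_inv_le_iff_of_pos hqδ hMpos.le (by linarith), hM]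
    exact le_max_right _ _
  · rcases max_choice (δ ^ (1 + s)⁻¹) ((q * δ) ^ (2 + s)⁻¹) with h | h
    · left
      rw [hM, h, Real.rpow_inv_rpow hδ.le (by linarith)]
    · right
      rw [hM, h, Real.rpow_inv_rpow hqδ (by linarith)]

/-- Lower bound on the truncated variance at a bandwidth of volume `A ≤ D M^s`. -/
lemma trunc_lower_bound {δ l q M Q A D κ I : ℝ} (hδ : 0 < δ) (hl : Real.log 2 ≤ l)
    (hM : 0 < M) (hQ : 0 < Q) (hA : 0 < A) (hD : 0 < D) (hκ : 0 < κ)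
    (h1 : δ ≤ M * Q) (heq : δ = M * Q ∨ q * δ = M ^ 2 * Q) (hAD : A ≤ D * Q)
    (hI : |I - q * κ| ≤ M * (κ / 2)) :
    min (Real.log 2 / D ^ 2) (κ / (2 * D)) * M ^ 2 ≤ max (δ ^ 2 / A ^ 2) (δ / l * A⁻¹ * I) * l := by
  have hlog2 : 0 < Real.log 2 := Real.log_pos one_lt_two
  have hl0 : 0 < l := hlog2.trans_le hl
  have hMA : M / D ≤ M * Q / A := by
    rw [div_le_div_iff₀ hD hA]
    nlinarith [mul_le_mul_of_nonneg_left hAD hM.le]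
  rcases heq with h | h
  · calc min (Real.log 2 / D ^ 2) (κ / (2 * D)) * M ^ 2 ≤ Real.log 2 / D ^ 2 * M ^ 2 := by
          gcongr; exact min_le_left _ _
      _ = (M / D) ^ 2 * Real.log 2 := by ring
      _ ≤ (M * Q / A) ^ 2 * l := by gcongr
      _ = δ ^ 2 / A ^ 2 * l := by rw [h, div_pow]
      _ ≤ _ := by gcongr; exact le_max_left _ _
  · have hqM : M ≤ q := by
      have : M * δ ≤ q * δ := by rw [h]; nlinarith
      exact le_of_mul_le_mul_right this hδ
    have hIge : q * κ / 2 ≤ I := by nlinarith [(abs_le.1 hI).1]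
    calc min (Real.log 2 / D ^ 2) (κ / (2 * D)) * M ^ 2 ≤ κ / (2 * D) * M ^ 2 := by
          gcongr; exact min_le_right _ _
      _ = κ / 2 * M * (M / D) := by field_simp
      _ ≤ κ / 2 * M * (M * Q / A) := by gcongr
      _ = q * δ * (κ / 2) / A := by rw [h]; ring
      _ = δ / l * A⁻¹ * (q * κ / 2) * l := by field_simp
      _ ≤ δ / l * A⁻¹ * I * l := by gcongr
      _ ≤ _ := by gcongr; exact le_max_right _ _

/-- Upper bound on the truncated variance at a bandwidth of volume `A ≥ D M^s`. -/
lemma trunc_upper_bound {δ l q M Q A D κ I : ℝ} (hδ : 0 < δ) (hl : Real.log 2 ≤ l)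
    (hM : 0 < M) (hQ : 0 < Q) (hA : 0 < A) (hD : 0 < D) (hκ : 0 < κ)
    (h1 : δ ≤ M * Q) (h2 : q * δ ≤ M ^ 2 * Q) (hAD : D * Q ≤ A) (hq : 0 ≤ q)
    (hI : |I - q * κ| ≤ M * (κ / 2)) :
    max (δ ^ 2 / A ^ 2) (δ / l * A⁻¹ * I) ≤
      max ((D ^ 2)⁻¹) (2 * κ / (Real.log 2 * D)) * M ^ 2 := by
  have hlog2 : 0 < Real.log 2 := Real.log_pos one_lt_two
  have hl0 : 0 < l := hlog2.trans_le hl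
  refine max_le ?_ ?_
  · calc δ ^ 2 / A ^ 2 ≤ (M * Q) ^ 2 / (D * Q) ^ 2 := by gcongr
      _ = (D ^ 2)⁻¹ * M ^ 2 := by field_simp
      _ ≤ _ := by gcongr; exact le_max_left _ _
  · have hIle : I ≤ q * κ + M * κ := by nlinarith [(abs_le.1 hI).2, mul_pos hM hκ]
    calc δ / l * A⁻¹ * I ≤ δ / l * A⁻¹ * (q * κ + M * κ) := by gcongr
      _ = κ * (q * δ + M * δ) / (l * A) := by field_simp
      _ ≤ κ * (M ^ 2 * Q + M * (M * Q)) / (Real.log 2 * (D * Q)) := by gcongr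
      _ = 2 * κ / (Real.log 2 * D) * M ^ 2 := by field_simp; ring
      _ ≤ _ := by gcongr; exact le_max_right _ _

end Rates

section ReferenceBandwidth

variable {d : ℕ} {K : Vec d → ℝ} {β : Vec d} {L : ℝ}

lemma bwOfZ_jbar_bounds (hd : 1 ≤ d) (hK : IsProductKernel d K) (hβ : ∀ i, 0 < β i) (hL : 0 < L)
    {n : ℕ} {q M : ℝ} (hδ : 0 < Real.log n / n) (hq : 0 ≤ q)
    (hM : M = max ((Real.log n / n) ^ (betaBar β / (betaBar β + 1)))
      ((q * (Real.log n / n)) ^ (betaBar β / (2 * betaBar β + 1)))) (i : Fin d) :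
    c8const d K β L / 2 * M ^ (β i)⁻¹ ≤ bwOfZ d (jbar d K β L n q) i ∧
      bwOfZ d (jbar d K β L n q) i ≤ c8const d K β L * M ^ (β i)⁻¹ := by
  have hMpos : 0 < M := hM ▸ lt_max_of_lt_left (Real.rpow_pos_of_pos hδ _)
  have hbar_eq : hbar d K β L n q i = c8const d K β L * M ^ (β i)⁻¹ := by
    rw [hbar, mul_div_assoc q, max_rpow_mul hδ.le (by positivity) (inv_pos.2 (hβ i)).le, hM]
  have hpos : 0 < c8const d K β L * M ^ (β i)⁻¹ :=
    mul_pos (c8const_pos hd hK hβ hL) (Real.rpow_pos_of_pos hMpos _)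
  have hdy := dyadic_bounds hpos
  rw [← hbar_eq] at hdy ⊢
  rw [div_mul_eq_mul_div, ← hbar_eq]
  exact hdy

end ReferenceBandwidth

/-- Lemma 5.4, properties of the dyadic reference bandwidth `j̄`.
There are constants `c₁₃(β,L), c₁₄(β,L) > 0` such that for every `p ∈ 𝒫_d(β,L)`
(`0 < β_i ≤ 2`), every `t` and every `n ≥ 2`:
(1) `B_t(j̄) ≤ c₁₃ √(σ²_{t,trunc}(j̄) log n)`, and
(2) `√(σ²_{t,trunc}(j̄)) ≤ c₁₄ max{ (log n/n)^{β̄/(β̄+1)}, (p(t) log n/n)^{β̄/(2β̄+1)} }`. -/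
theorem statement12 (d : ℕ) (hd : 1 ≤ d) (K : Vec d → ℝ) (hK : IsProductKernel d K)
    (β : Vec d) (hβ : ∀ i, 0 < β i ∧ β i ≤ 2) (L : ℝ) (hL : 0 < L) :
    ∃ c13 c14 : ℝ, 0 < c13 ∧ 0 < c14 ∧
      ∀ p : Vec d → ℝ, Pclass d β L p → ∀ t : Vec d, ∀ n : ℕ, 2 ≤ n →
        biasBound d K β L (bwOfZ d (jbar d K β L n (p t))) ≤
            c13 * Real.sqrt (sigmaSqTrunc d n K p (bwOfZ d (jbar d K β L n (p t))) t *
              Real.log n) ∧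
          Real.sqrt (sigmaSqTrunc d n K p (bwOfZ d (jbar d K β L n (p t))) t) ≤
            c14 * max ((Real.log n / n) ^ (betaBar β / (betaBar β + 1)))
              ((p t * Real.log n / n) ^ (betaBar β / (2 * betaBar β + 1))) := by
  have hβ0 : ∀ i, 0 < β i := fun i => (hβ i).1
  have hlog2 : 0 < Real.log 2 := Real.log_pos one_lt_two
  have : Nonempty (Fin d) := ⟨⟨0, hd⟩⟩
  have hd0 : (0 : ℝ) < d := by exact_mod_cast hd
  have hκ := hK.K2sq_pos
  have hc8 := c8const_pos hd hK hβ0 hL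
  set κ := K2sq d K
  set c8 := c8const d K β L
  set s := ∑ i, (β i)⁻¹ with hs_def
  have hs : 0 < s := Finset.sum_pos (fun i _ => inv_pos.2 (hβ0 i)) Finset.univ_nonempty
  set Dlow := (c8 / 2) ^ d
  set Dup := c8 ^ d
  have hDlow : 0 < Dlow := by positivity
  have hDup : 0 < Dup := by positivity
  set m := min (Real.log 2 / Dup ^ 2) (κ / (2 * Dup))
  have hm : 0 < m := lt_min (by positivity) (by positivity)
  set C := max ((Dlow ^ 2)⁻¹) (2 * κ / (Real.log 2 * Dlow))
  have hC : 0 < C := lt_max_of_lt_left (by positivity)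
  set b := L * ∑ i, (∫ x : Vec d, |x i| ^ β i * |K x|) * c8 ^ β i with hb_def
  have hc9 : ∀ i, 0 ≤ ∫ x : Vec d, |x i| ^ β i * |K x| := fun i =>
    integral_nonneg fun x => by positivity
  have hb : 0 ≤ b := mul_nonneg hL.le (Finset.sum_nonneg fun i _ =>
    mul_nonneg (hc9 i) (Real.rpow_nonneg hc8.le _))
  refine ⟨(b + 1) / √m, √C, by positivity, by positivity, ?_⟩
  intro p hp t n hn
  have hn0 : (0 : ℝ) < n := by positivity
  have hl : Real.log 2 ≤ Real.log n := Real.log_le_log two_pos (by exact_mod_cast hn)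
  have hl0 : 0 < Real.log n := hlog2.trans_le hl
  have hδ : 0 < Real.log n / n := by positivity
  have hq : 0 ≤ p t := hp.1.2.1 t
  rw [mul_div_assoc (p t)]
  set h := bwOfZ d (jbar d K β L n (p t))
  set M := max ((Real.log n / n) ^ (betaBar β / (betaBar β + 1)))
    ((p t * (Real.log n / n)) ^ (betaBar β / (2 * betaBar β + 1))) with hM_def
  have hbw : ∀ i, c8 / 2 * M ^ (β i)⁻¹ ≤ h i ∧ h i ≤ c8 * M ^ (β i)⁻¹ := fun i =>
    bwOfZ_jbar_bounds hd hK hβ0 hL hδ hq hM_def i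
  obtain ⟨hM, hδM, hqM, heq⟩ := rate_balance hs hδ hq hM_def
  have hQ : 0 < M ^ s := Real.rpow_pos_of_pos hM s
  have hMi : ∀ i, 0 < M ^ (β i)⁻¹ := fun i => Real.rpow_pos_of_pos hM _
  have hh : ∀ i, 0 < h i := fun i => (mul_pos (half_pos hc8) (hMi i)).trans_le (hbw i).1
  have hA : 0 < ∏ i, h i := Finset.prod_pos fun i _ => hh i
  have hprod : ∀ c : ℝ, ∏ i, c * M ^ (β i)⁻¹ = c ^ d * M ^ s := fun c => by
    rw [Finset.prod_mul_distrib, Finset.prod_const, Finset.card_univ, Fintype.card_fin,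
      hs_def, Real.rpow_sum_of_pos hM]
  have hAlow : Dlow * M ^ s ≤ ∏ i, h i := by
    rw [← hprod]
    exact Finset.prod_le_prod (fun i _ => (mul_pos (half_pos hc8) (hMi i)).le) fun i _ => (hbw i).1
  have hAup : ∏ i, h i ≤ Dup * M ^ s := by
    rw [← hprod]
    exact Finset.prod_le_prod (fun i _ => (hh i).le) fun i _ => (hbw i).2
  have hpow : ∀ i, h i ^ β i ≤ c8 ^ β i * M := fun i => by
    refine (Real.rpow_le_rpow (hh i).le (hbw i).2 (hβ0 i).le).trans_eq ?_
    rw [Real.mul_rpow hc8.le (hMi i).le, Real.rpow_inv_rpow hM.le (hβ0 i).ne']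
  set I := ∫ x, K x ^ 2 * p fun i => t i - h i * x i
  have hI : |I - p t * κ| ≤ M * (κ / 2) := by
    refine (hp.abs_integral_sq_mul_sub_le hK hβ hL.le fun i => (hh i).le).trans ?_
    have hterm : ∀ i, L * h i ^ β i * (∫ x, |x i| ^ β i * K x ^ 2) ≤ M * (κ / (2 * d)) := by
      intro i
      have hpos := hK.integral_abs_rpow_mul_sq_pos i (hβ0 i).le
      calc L * h i ^ β i * (∫ x, |x i| ^ β i * K x ^ 2)
          ≤ L * (c8 ^ β i * M) * (∫ x, |x i| ^ β i * K x ^ 2) := by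
            gcongr
            exact hpow i
        _ = M * (L * c8 ^ β i * (∫ x, |x i| ^ β i * K x ^ 2)) := by ring
        _ ≤ M * (κ / (2 * d)) := by
            gcongr
            exact c8const_rpow_mul_le hd hK hβ0 hL i
    refine (Finset.sum_le_sum fun i _ => hterm i).trans_eq ?_
    rw [Finset.sum_const, Finset.card_univ, Fintype.card_fin, nsmul_eq_mul]
    field_simp
  have htrunc : sigmaSqTrunc d n K p h t =
      max ((Real.log n / n) ^ 2 / (∏ i, h i) ^ 2)
        (Real.log n / n / Real.log n * (∏ i, h i)⁻¹ * I) := by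
    rw [sigmaSqTrunc, truncLevel, sigmaSq_eq hh]
    congr 1
    · field_simp
    · rw [div_div_cancel_left' hl0.ne']
  rw [htrunc]
  constructor
  · have hbias : biasBound d K β L h ≤ b * M := by
      rw [biasBound, hb_def, mul_assoc, Finset.sum_mul]
      refine mul_le_mul_of_nonneg_left (Finset.sum_le_sum fun i _ => ?_) hL.le
      rw [mul_assoc]
      exact mul_le_mul_of_nonneg_left (hpow i) (hc9 i)
    have hlow := trunc_lower_bound hδ hl hM hQ hA hDup hκ hδM heq hAup hI
    have hsqrt := Real.sqrt_le_sqrt hlow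
    rw [Real.sqrt_mul hm.le, Real.sqrt_sq hM.le] at hsqrt
    have hmpos : 0 < √m := Real.sqrt_pos.2 hm
    calc biasBound d K β L h ≤ (b + 1) * M := hbias.trans (by gcongr; linarith)
      _ = (b + 1) / √m * (√m * M) := by field_simp
      _ ≤ _ := by gcongr
  · have hup := trunc_upper_bound hδ hl hM hQ hA hDlow hκ hδM hqM hAlow hq hI
    have hsqrt := Real.sqrt_le_sqrt hup
    rwa [Real.sqrt_mul hC.le, Real.sqrt_sq hM.le] at hsqrt
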